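/- arXiv:2105.06726 — 6 statements merged into one kernel-verified Lean document; each statement's English description precedes it below -/
import Mathlib

section
/- Fix real exponents q, p, r, γ with 1 < q < p < r and 0 < γ < 1, and fix λ > 0 and c > 0. Then for every real M there exists R > 0 such that: whenever real numbers A > 0, B ≥ 0, C ≥ 0, D ≥ 0 satisfy the Nehari identity A + D = B + λ·C, the bound B ≤ c·A^{(1−γ)/p}, and A ≥ R, one has A/p + D/q − B/(1−γ) − λ·C/r ≥ M. (Abstract form of the coercivity of the energy functional restricted to the Nehari manifold, Proposition 1.) -/
open Real

/-- Abstract form of the coercivity of the energy functional restricted to the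
Nehari manifold (Proposition 1). -/
theorem nehari_coercive (q p r γ lam c : ℝ)
    (hq : 1 < q) (hqp : q < p) (hpr : p < r)
    (hγ0 : 0 < γ) (hγ1 : γ < 1) (hlam : 0 < lam) (hc : 0 < c) :
    ∀ M : ℝ, ∃ R > 0, ∀ A B C D : ℝ,
      0 < A → 0 ≤ B → 0 ≤ C → 0 ≤ D →
      A + D = B + lam * C →
      B ≤ c * A ^ ((1 - γ) / p) →
      R ≤ A →
      M ≤ A / p + D / q - B / (1 - γ) - lam * C / r := by
  intro M
  have hp : 0 < p := by linarith
  have hr : 0 < r := by linarith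
  have hq0 : 0 < q := by linarith
  have hg : 0 < 1 - γ := by linarith
  have hs : (1 - γ) / p < 1 := by rw [div_lt_one hp]; linarith
  have ha : 0 < p⁻¹ - r⁻¹ := sub_pos.2 (inv_strictAnti₀ hp hpr)
  have hd : 0 < q⁻¹ - r⁻¹ := sub_pos.2 (inv_strictAnti₀ hq0 (by linarith))
  have hb : 0 < (1 - γ)⁻¹ - r⁻¹ := sub_pos.2 (inv_strictAnti₀ hg (by linarith))
  generalize ha' : p⁻¹ - r⁻¹ = a at *
  generalize hd' : q⁻¹ - r⁻¹ = d at *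
  generalize hb' : (1 - γ)⁻¹ - r⁻¹ = b at *
  have hε : 0 < a / (2 * (b * c)) := by positivity
  have ho := (tendsto_rpow_neg_atTop (sub_pos.2 hs)).eventually (gt_mem_nhds hε)
  obtain ⟨R₀, hR₀⟩ := Filter.eventually_atTop.1 ho
  refine ⟨max 1 (max R₀ (2 * M / a)), by positivity, ?_⟩
  intro A B C D hA hB hC hD hN hBA hR
  have h0 := hR₀ A (le_trans (le_trans (le_max_left _ _) (le_max_right _ _)) hR)
  have h2 : 2 * M / a ≤ A := le_trans (le_trans (le_max_right _ _) (le_max_right _ _)) hR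
  have h1 : A ^ ((1 - γ) / p) ≤ a / (2 * (b * c)) * A := by
    have e : A ^ ((1 - γ) / p) = A ^ (-(1 - (1 - γ) / p)) * A := by
      rw [← rpow_add_one hA.ne']
      congr 1
      ring
    rw [e]
    exact mul_le_mul_of_nonneg_right h0.le hA.le
  rw [div_le_iff₀ ha] at h2
  have h3 : b * B ≤ a / 2 * A := by
    calc b * B ≤ b * (c * (a / (2 * (b * c)) * A)) := by
          apply mul_le_mul_of_nonneg_left _ hb.le
          exact hBA.trans (mul_le_mul_of_nonneg_left h1 hc.le)
      _ = a / 2 * A := by field_simp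
  have h4 : A / p + D / q - B / (1 - γ) - lam * C / r = a * A + d * D - b * B := by
    have : lam * C = A + D - B := by linarith
    rw [this, ← ha', ← hd', ← hb']
    simp only [div_eq_mul_inv]
    ring
  have h5 : 0 ≤ d * D := by positivity
  rw [h4]
  linarith
end

section
/- Fix real exponents q, p, r, γ with 1 < q < p < r and 0 < γ < 1, and fix λ > 0. If real numbers A > 0, B ≥ 0, C ≥ 0, D ≥ 0 satisfy the Nehari identity A + D = B + λ·C and the strict inequality (p+γ−1)·A + (q+γ−1)·D > λ·(r+γ−1)·C, then A/p + D/q − B/(1−γ) − λ·C/r < 0. (Abstract form of Proposition 2: the energy functional is strictly negative on the component N_λ⁺ of the Nehari manifold, hence m_λ⁺ = inf over N_λ⁺ of the energy is negative whenever N_λ⁺ is nonempty.) -/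
open Real

/-- Abstract form of Proposition 2: the energy functional is strictly negative on
the component `N_λ⁺` of the Nehari manifold. -/
theorem energy_neg_on_Nplus (q p r γ lam : ℝ)
    (hq : 1 < q) (hqp : q < p) (hpr : p < r)
    (hγ0 : 0 < γ) (hγ1 : γ < 1) (hlam : 0 < lam)
    (A B C D : ℝ) (hA : 0 < A) (hB : 0 ≤ B) (hC : 0 ≤ C) (hD : 0 ≤ D)
    (hnehari : A + D = B + lam * C)
    (hplus : (p + γ - 1) * A + (q + γ - 1) * D > lam * ((r + γ - 1) * C)) :
    A / p + D / q - B / (1 - γ) - lam * C / r < 0 := by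
  have hp : 0 < p := by linarith
  have hq0 : 0 < q := by linarith
  have hr : 0 < r := by linarith
  have hs : 0 < 1 - γ := by linarith
  have hBe : B = A + D - lam * C := by linarith
  have key : A / p + D / q - B / (1 - γ) - lam * C / r =
      (1 / (1 - γ)) * ((lam * ((r + γ - 1) * C) - ((p + γ - 1) * A + (q + γ - 1) * D)) / r
        - (p + γ - 1) * A * (1 / p - 1 / r) - (q + γ - 1) * D * (1 / q - 1 / r)) := by
    rw [hBe]
    field_simp
    ring
  rw [key]
  have h1 : (lam * ((r + γ - 1) * C) - ((p + γ - 1) * A + (q + γ - 1) * D)) / r < 0 :=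
    div_neg_of_neg_of_pos (by linarith) hr
  have h2 : 0 ≤ (p + γ - 1) * A * (1 / p - 1 / r) :=
    mul_nonneg (mul_nonneg (by linarith) hA.le)
      (sub_nonneg.2 (one_div_le_one_div_of_le hp hpr.le))
  have h3 : 0 ≤ (q + γ - 1) * D * (1 / q - 1 / r) :=
    mul_nonneg (mul_nonneg (by linarith) hD)
      (sub_nonneg.2 (one_div_le_one_div_of_le hq0 (by linarith)))
  exact mul_neg_of_pos_of_neg (by positivity) (by linarith)
end

section
/- Fix real exponents q, p, r, γ with 1 < q < p < r and 0 < γ < 1, and constants c₃ > 0, c₄ > 0. Then there exists λ* > 0 such that for every λ ∈ (0, λ*) there are no real numbers A > 0, B ≥ 0, C ≥ 0, D ≥ 0 satisfying simultaneously: the Nehari identity A + D = B + λ·C, the degeneracy condition (p+γ−1)·A + (q+γ−1)·D = λ·(r+γ−1)·C, the bound B ≤ c₃·A^{(1−γ)/p}, and the bound C ≤ c₄·A^{r/p}. (Abstract form of Proposition 3: the degenerate part N_λ⁰ of the Nehari manifold is empty for all small λ > 0.) -/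
open Real

/-- Abstract form of Proposition 3: the degenerate part `N_λ⁰` of the Nehari
manifold is empty for all small `λ > 0`. -/
theorem N0_empty_small_lambda (q p r γ c₃ c₄ : ℝ)
    (hq : 1 < q) (hqp : q < p) (hpr : p < r)
    (hγ0 : 0 < γ) (hγ1 : γ < 1) (hc₃ : 0 < c₃) (hc₄ : 0 < c₄) :
    ∃ lamStar > 0, ∀ lam : ℝ, 0 < lam → lam < lamStar →
      ¬ ∃ A B C D : ℝ,
        0 < A ∧ 0 ≤ B ∧ 0 ≤ C ∧ 0 ≤ D ∧
        A + D = B + lam * C ∧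
        (p + γ - 1) * A + (q + γ - 1) * D = lam * ((r + γ - 1) * C) ∧
        B ≤ c₃ * A ^ ((1 - γ) / p) ∧
        C ≤ c₄ * A ^ (r / p) := by
  have hp : 0 < p := by linarith
  have hk : 0 < r + γ - 1 := by linarith
  have hm : 0 < p + γ - 1 := by linarith
  have hrp : 0 < r - p := by linarith
  have hs : (1 - γ) / p < 1 := by rw [div_lt_one hp]; linarith
  have ht : 1 < r / p := by rw [one_lt_div hp]; exact hpr
  generalize (1 - γ) / p = s at hs ⊢
  generalize r / p = t at ht ⊢
  have hs' : 0 < 1 - s := by linarith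
  set K := (r + γ - 1) * c₃ / (r - p) with hK
  have hKpos : 0 < K := by positivity
  set M := K ^ (1 / (1 - s)) with hM
  have hMpos : 0 < M := by positivity
  have hMt : 0 < M ^ (t - 1) := by positivity
  refine ⟨(p + γ - 1) / ((r + γ - 1) * c₄ * M ^ (t - 1)), by positivity, ?_⟩
  rintro lam hl hlt ⟨A, B, C, D, hA, hB, hC, hD, h1, h2, h3, h4⟩
  rw [lt_div_iff₀ (by positivity)] at hlt
  have e1 : A ^ s * A ^ (1 - s) = A := by
    rw [← Real.rpow_add hA]; simp
  have e2 : A ^ (t - 1) * A = A ^ t := by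
    rw [← Real.rpow_add_one hA.ne']; simp
  have hAs : 0 < A ^ s := by positivity
  have a1 : (r - p) * A ≤ (r + γ - 1) * (c₃ * A ^ s) := by
    have := mul_le_mul_of_nonneg_left h3 hk.le
    have h5 : (r - p) * A + (r - q) * D = (r + γ - 1) * B := by
      linear_combination (r + γ - 1) * h1 - h2
    have : 0 ≤ (r - q) * D := mul_nonneg (by linarith) hD
    linarith
  have a2 : A ^ (1 - s) ≤ K := by
    rw [hK, le_div_iff₀ hrp]
    refine le_of_mul_le_mul_left ?_ hAs
    calc A ^ s * (A ^ (1 - s) * (r - p)) = (r - p) * (A ^ s * A ^ (1 - s)) := by ring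
      _ ≤ _ := by rw [e1]; linarith
  have a3 : A ≤ M := by
    have := Real.rpow_le_rpow (by positivity) a2 (by positivity : 0 ≤ 1 / (1 - s))
    rwa [← Real.rpow_mul hA.le, mul_one_div_cancel hs'.ne', Real.rpow_one] at this
  have a4 : A ^ (t - 1) ≤ M ^ (t - 1) := Real.rpow_le_rpow hA.le a3 (by linarith)
  have a5 : (p + γ - 1) * A ≤ lam * ((r + γ - 1) * (c₄ * A ^ t)) := by
    have h5 : lam * ((r + γ - 1) * C) ≤ lam * ((r + γ - 1) * (c₄ * A ^ t)) := by gcongr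
    have : 0 ≤ (q + γ - 1) * D := mul_nonneg (by linarith) hD
    linarith
  have a6 : p + γ - 1 ≤ lam * ((r + γ - 1) * c₄ * A ^ (t - 1)) := by
    refine le_of_mul_le_mul_right ?_ hA
    rw [← e2] at a5
    linarith
  have a7 : lam * ((r + γ - 1) * c₄ * A ^ (t - 1))
      ≤ lam * ((r + γ - 1) * c₄ * M ^ (t - 1)) := by gcongr
  linarith
end

section
/- Fix real exponents q, p, r, γ with 1 < q < p < r and 0 < γ < 1, and reals A > 0, B > 0, D ≥ 0. Define w : (0,∞) → ℝ by w(t) = t^{p−r}·A + t^{q−r}·D − t^{1−r−γ}·B. Then: (i) w has a unique critical point t₀ ∈ (0,∞); (ii) w is strictly increasing on (0, t₀] and strictly decreasing on [t₀, ∞), so w attains its global maximum over (0,∞) exactly at t₀; (iii) w(t) → −∞ as t → 0⁺ and w(t) → 0 as t → +∞, with w(t) > 0 for all sufficiently large t; in particular w(t₀) > 0. -/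
open Real Filter

/-- Qualitative behavior of the full fiber function
`w(t) = t^{p−r}A + t^{q−r}D − t^{1−r−γ}B` on `(0, ∞)`: unique critical point `t₀`,
strictly increasing then strictly decreasing (global maximum exactly at `t₀`),
`w → −∞` at `0⁺`, `w → 0` at `+∞`, `w > 0` for large `t`, and `w(t₀) > 0`. -/
theorem full_fiber_shape (q p r γ A B D : ℝ)
    (hq : 1 < q) (hqp : q < p) (hpr : p < r)
    (hγ0 : 0 < γ) (hγ1 : γ < 1) (hA : 0 < A) (hB : 0 < B) (hD : 0 ≤ D) :
    let w : ℝ → ℝ := fun t => t ^ (p - r) * A + t ^ (q - r) * D - t ^ (1 - r - γ) * B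
    ∃ t₀ : ℝ, 0 < t₀ ∧
      (∀ t : ℝ, 0 < t → (deriv w t = 0 ↔ t = t₀)) ∧
      StrictMonoOn w (Set.Ioc 0 t₀) ∧
      StrictAntiOn w (Set.Ici t₀) ∧
      (∀ t : ℝ, 0 < t → t ≠ t₀ → w t < w t₀) ∧
      Tendsto w (nhdsWithin 0 (Set.Ioi 0)) atBot ∧
      Tendsto w atTop (nhds 0) ∧
      (∃ T : ℝ, ∀ t : ℝ, T ≤ t → 0 < w t) ∧
      0 < w t₀ := by
  intro w
  have ha : 0 < p + γ - 1 := by linarith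
  have hb : 0 < q + γ - 1 := by linarith
  have hc : 0 < r + γ - 1 := by linarith
  have hrp : 0 < r - p := by linarith
  have hrq : 0 < r - q := by linarith
  let g : ℝ → ℝ := fun t => (r - p) * A * t ^ (p + γ - 1) + (r - q) * D * t ^ (q + γ - 1)
  let h : ℝ → ℝ := fun t => A * t ^ (p + γ - 1) + D * t ^ (q + γ - 1) - B
  have hw : ∀ t, 0 < t → w t = t ^ (-(r + γ - 1)) * h t := by
    intro t ht
    have e1 : t ^ (p - r) = t ^ (-(r + γ - 1)) * t ^ (p + γ - 1) := by
      rw [← rpow_add ht]; ring_nf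
    have e2 : t ^ (q - r) = t ^ (-(r + γ - 1)) * t ^ (q + γ - 1) := by
      rw [← rpow_add ht]; ring_nf
    have e3 : t ^ (1 - r - γ) = t ^ (-(r + γ - 1)) := by ring_nf
    simp only [w, h]
    rw [e1, e2, e3]; ring
  have hder : ∀ t, 0 < t → HasDerivAt w (t ^ (-r - γ) * ((r + γ - 1) * B - g t)) t := by
    intro t ht
    have d1 := (Real.hasDerivAt_rpow_const (x := t) (p := p - r) (Or.inl ht.ne')).mul_const A
    have d2 := (Real.hasDerivAt_rpow_const (x := t) (p := q - r) (Or.inl ht.ne')).mul_const D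
    have d3 := (Real.hasDerivAt_rpow_const (x := t) (p := 1 - r - γ) (Or.inl ht.ne')).mul_const B
    have d := (d1.add d2).sub d3
    refine HasDerivAt.congr_deriv (f := w) d ?_
    have e1 : t ^ (p - r - 1) = t ^ (-r - γ) * t ^ (p + γ - 1) := by
      rw [← rpow_add ht]; ring_nf
    have e2 : t ^ (q - r - 1) = t ^ (-r - γ) * t ^ (q + γ - 1) := by
      rw [← rpow_add ht]; ring_nf
    have e3 : t ^ (1 - r - γ - 1) = t ^ (-r - γ) := by ring_nf
    simp only [g]
    rw [e1, e2, e3]; ring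
  have gmono : StrictMonoOn g (Set.Ici 0) := by
    intro x hx y hy hxy
    have h1 : x ^ (p + γ - 1) < y ^ (p + γ - 1) := rpow_lt_rpow hx hxy ha
    have h2 : x ^ (q + γ - 1) ≤ y ^ (q + γ - 1) := rpow_le_rpow hx hxy.le hb.le
    exact add_lt_add_of_lt_of_le (mul_lt_mul_of_pos_left h1 (by positivity))
      (mul_le_mul_of_nonneg_left h2 (by positivity))
  have gcont : Continuous g :=
    (continuous_const.mul (continuous_rpow_const ha.le)).add
      (continuous_const.mul (continuous_rpow_const hb.le))
  have hcont : Continuous h :=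
    ((continuous_const.mul (continuous_rpow_const ha.le)).add
      (continuous_const.mul (continuous_rpow_const hb.le))).sub continuous_const
  have g0 : g 0 = 0 := by simp [g, zero_rpow ha.ne', zero_rpow hb.ne']
  have h0 : h 0 = -B := by simp [h, zero_rpow ha.ne', zero_rpow hb.ne']
  have glim : Tendsto g atTop atTop := by
    refine tendsto_atTop_mono' atTop ?_
      ((tendsto_rpow_atTop ha).const_mul_atTop (mul_pos hrp hA))
    filter_upwards [eventually_ge_atTop 0] with t ht
    have : 0 ≤ (r - q) * D * t ^ (q + γ - 1) := by positivity
    simp only [g]; linarith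
  have hcB : 0 < (r + γ - 1) * B := mul_pos hc hB
  obtain ⟨M, hM, hM0⟩ := ((glim.eventually_gt_atTop ((r + γ - 1) * B)).and
    (eventually_ge_atTop 0)).exists
  obtain ⟨t₀, ht₀m, ht₀⟩ := intermediate_value_Icc hM0 gcont.continuousOn
    (show (r + γ - 1) * B ∈ Set.Icc (g 0) (g M) from ⟨by rw [g0]; exact hcB.le, hM.le⟩)
  have t0pos : 0 < t₀ := by
    rcases ht₀m.1.lt_or_eq with h' | h'
    · exact h'
    · rw [← h', g0] at ht₀; linarith
  have wcont : ContinuousOn w (Set.Ioi 0) := fun t ht =>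
    (hder t ht).continuousAt.continuousWithinAt
  have hmono : StrictMonoOn w (Set.Ioc 0 t₀) := by
    refine strictMonoOn_of_deriv_pos (convex_Ioc 0 t₀) (wcont.mono fun x hx => hx.1) ?_
    intro x hx
    rw [interior_Ioc] at hx
    rw [(hder x hx.1).deriv]
    have := gmono hx.1.le t0pos.le hx.2
    exact mul_pos (rpow_pos_of_pos hx.1 _) (by linarith)
  have hanti : StrictAntiOn w (Set.Ici t₀) := by
    refine strictAntiOn_of_deriv_neg (convex_Ici t₀)
      (wcont.mono fun x hx => lt_of_lt_of_le t0pos hx) ?_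
    intro x hx
    rw [interior_Ici] at hx
    have hx0 : 0 < x := t0pos.trans hx
    rw [(hder x hx0).deriv]
    have := gmono t0pos.le hx0.le hx
    exact mul_neg_of_pos_of_neg (rpow_pos_of_pos hx0 _) (by linarith)
  have hmax : ∀ t : ℝ, 0 < t → t ≠ t₀ → w t < w t₀ := by
    intro t ht hne
    rcases lt_or_gt_of_ne hne with h' | h'
    · exact hmono ⟨ht, h'.le⟩ ⟨t0pos, le_rfl⟩ h'
    · exact hanti (Set.mem_Ici.2 le_rfl) (Set.mem_Ici.2 h'.le) h'
  have hlim : Tendsto h atTop atTop := by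
    have := tendsto_atTop_add_const_right atTop (-B)
      ((tendsto_rpow_atTop ha).const_mul_atTop hA)
    refine tendsto_atTop_mono' atTop ?_ this
    filter_upwards [eventually_ge_atTop 0] with t ht
    have : 0 ≤ D * t ^ (q + γ - 1) := by positivity
    simp only [h]; linarith
  have hpos : ∃ T : ℝ, ∀ t : ℝ, T ≤ t → 0 < w t := by
    rw [← eventually_atTop]
    filter_upwards [hlim.eventually_gt_atTop 0, eventually_gt_atTop 0] with t h1 h2
    rw [hw t h2]
    exact mul_pos (rpow_pos_of_pos h2 _) h1
  refine ⟨t₀, t0pos, ?_, hmono, hanti, hmax, ?_, ?_, hpos, ?_⟩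
  · intro t ht
    rw [(hder t ht).deriv, mul_eq_zero, or_iff_right (rpow_pos_of_pos ht _).ne']
    constructor
    · intro h'
      exact gmono.injOn ht.le t0pos.le (by linarith)
    · rintro rfl; linarith
  · have l1 : Tendsto (fun t : ℝ => t ^ (-(r + γ - 1))) (nhdsWithin 0 (Set.Ioi 0)) atTop :=
      tendsto_rpow_neg_nhdsGT_zero (by linarith)
    have l2 : Tendsto h (nhdsWithin 0 (Set.Ioi 0)) (nhds (-B)) := by
      rw [← h0]; exact hcont.continuousAt.tendsto.mono_left nhdsWithin_le_nhds
    refine (l1.atTop_mul_neg (by linarith) l2).congr' ?_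
    filter_upwards [self_mem_nhdsWithin] with t ht
    exact (hw t ht).symm
  · have l1 := (tendsto_rpow_neg_atTop hrp).mul_const A
    have l2 := (tendsto_rpow_neg_atTop hrq).mul_const D
    have l3 := (tendsto_rpow_neg_atTop hc).mul_const B
    have l := (l1.add l2).sub l3
    have e3 : -(r + γ - 1) = 1 - r - γ := by ring
    simp only [neg_sub, e3, zero_mul, add_zero, sub_zero] at l
    exact l
  · obtain ⟨T, hT⟩ := hpos
    have h1 := hT (max T (t₀ + 1)) (le_max_left _ _)
    have h2 : t₀ + 1 ≤ max T (t₀ + 1) := le_max_right _ _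
    exact h1.trans (hmax _ (by linarith) (by intro h'; linarith))
end

section
/- Fix real exponents q, p, r, γ with 1 < q < p < r and 0 < γ < 1, λ > 0, and c₉ > 0. If reals A > 0, B ≥ 0, C > 0, D ≥ 0 satisfy the Nehari identity A + D = B + λ·C, the strict energy inequality A/p + D/q − B/(1−γ) − λ·C/r < 0, and the bound B ≤ c₉·C^{(1−γ)/r}, then C^{(r+γ−1)/r} ≤ ((p+γ−1)·r·c₉) / (λ·(r−p)·(1−γ)). (Abstract form of estimate (26): a negative-energy point of the Nehari manifold has L^r-norm bounded above by a constant times λ^{−1/(r+γ−1)}.) -/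
open Real

/-- Abstract form of estimate (26): a negative-energy point of the Nehari
manifold has `L^r`-norm bounded above by a constant times `λ^{−1/(r+γ−1)}`. -/
theorem negative_energy_upper_bound (q p r γ lam c₉ : ℝ)
    (hq : 1 < q) (hqp : q < p) (hpr : p < r)
    (hγ0 : 0 < γ) (hγ1 : γ < 1) (hlam : 0 < lam) (hc₉ : 0 < c₉)
    (A B C D : ℝ) (hA : 0 < A) (hB : 0 ≤ B) (hC : 0 < C) (hD : 0 ≤ D)
    (hnehari : A + D = B + lam * C)
    (henergy : A / p + D / q - B / (1 - γ) - lam * C / r < 0)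
    (hhold : B ≤ c₉ * C ^ ((1 - γ) / r)) :
    C ^ ((r + γ - 1) / r) ≤ (p + γ - 1) * r * c₉ / (lam * (r - p) * (1 - γ)) := by
  have hp : 0 < p := by linarith
  have hr : 0 < r := by linarith
  have hg : 0 < 1 - γ := by linarith
  have hDq : D / p ≤ D / q := div_le_div_of_nonneg_left hD (by linarith) hqp.le
  have h1 : (B + lam * C) / p - B / (1 - γ) - lam * C / r < 0 := by
    rw [← hnehari, add_div]
    linarith
  have h2 : lam * C * (r - p) * (1 - γ) < B * (p + γ - 1) * r := by
    have h3 : (B + lam * C) / p - B / (1 - γ) - lam * C / r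
        = (lam * C * (r - p) * (1 - γ) - B * (p + γ - 1) * r) / (p * (1 - γ) * r) := by
      field_simp
      ring
    rw [h3, div_neg_iff] at h1
    have hpos : 0 < p * (1 - γ) * r := by positivity
    rcases h1 with h | h
    · linarith [h.2]
    · linarith [h.1]
  have hsplit : C = C ^ ((r + γ - 1) / r) * C ^ ((1 - γ) / r) := by
    rw [← Real.rpow_add hC, ← add_div]
    have : (r + γ - 1 + (1 - γ)) / r = 1 := by
      field_simp
      ring
    rw [this, Real.rpow_one]
  have hrp : 0 < r - p := by linarith
  have hpg : 0 < p + γ - 1 := by linarith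
  rw [le_div_iff₀ (by positivity)]
  have hY : 0 < C ^ ((1 - γ) / r) := Real.rpow_pos_of_pos hC _
  generalize C ^ ((1 - γ) / r) = Y at *
  generalize C ^ ((r + γ - 1) / r) = X at *
  have h4 : B * ((p + γ - 1) * r) ≤ c₉ * Y * ((p + γ - 1) * r) :=
    mul_le_mul_of_nonneg_right hhold (by positivity)
  refine le_of_mul_le_mul_right ?_ hY
  rw [hsplit] at h2
  linarith
end

section
/- Fix real exponents q, p, r, γ with 1 < q < p < r and 0 < γ < 1, and constants c₈ > 0, c₉ > 0. Then there exists λ₀ > 0 such that for every λ ∈ (0, λ₀]: whenever reals A > 0, B ≥ 0, C > 0, D ≥ 0 satisfy the Nehari identity A + D = B + λ·C, the N⁻ condition (p+γ−1)·A + (q+γ−1)·D < λ·(r+γ−1)·C, and the bounds A ≥ c₈·C^{p/r} and B ≤ c₉·C^{(1−γ)/r}, one has A/p + D/q − B/(1−γ) − λ·C/r ≥ 0. (Abstract form of Proposition 9: the energy functional is nonnegative on N_λ⁻ for all small λ > 0.) -/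
open Real

/-- Abstract form of Proposition 9: the energy functional is nonnegative on
`N_λ⁻` for all small `λ > 0`. -/
theorem energy_nonneg_on_Nminus (q p r γ c₈ c₉ : ℝ)
    (hq : 1 < q) (hqp : q < p) (hpr : p < r)
    (hγ0 : 0 < γ) (hγ1 : γ < 1) (hc₈ : 0 < c₈) (hc₉ : 0 < c₉) :
    ∃ lam₀ > 0, ∀ lam : ℝ, 0 < lam → lam ≤ lam₀ →
      ∀ A B C D : ℝ, 0 < A → 0 ≤ B → 0 < C → 0 ≤ D →
        A + D = B + lam * C →
        (p + γ - 1) * A + (q + γ - 1) * D < lam * ((r + γ - 1) * C) →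
        c₈ * C ^ (p / r) ≤ A →
        B ≤ c₉ * C ^ ((1 - γ) / r) →
        0 ≤ A / p + D / q - B / (1 - γ) - lam * C / r := by
  have hk : 0 < 1 / p - 1 / r := sub_pos.2 (one_div_lt_one_div_of_lt (by linarith) hpr)
  have hkq : 0 < 1 / q - 1 / r :=
    sub_pos.2 (one_div_lt_one_div_of_lt (by linarith) (by linarith))
  have hm : 0 < 1 / (1 - γ) - 1 / r :=
    sub_pos.2 (one_div_lt_one_div_of_lt (by linarith) (by linarith))
  have hr : 0 < r := by linarith
  have hP : 0 < p + γ - 1 := by linarith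
  have hR : 0 < r + γ - 1 := by linarith
  have hQ : 0 < q + γ - 1 := by linarith
  obtain ⟨k, hkdef⟩ : ∃ k, k = 1 / p - 1 / r := ⟨_, rfl⟩
  obtain ⟨m, hmdef⟩ : ∃ m, m = 1 / (1 - γ) - 1 / r := ⟨_, rfl⟩
  rw [← hkdef] at hk
  rw [← hmdef] at hm
  obtain ⟨t, ht⟩ : ∃ t, t = (p + γ - 1) / r := ⟨_, rfl⟩
  obtain ⟨s, hs⟩ : ∃ s, s = (r - p) / r := ⟨_, rfl⟩
  have ht0 : 0 < t := ht ▸ div_pos hP hr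
  have hs0 : 0 < s := hs ▸ div_pos (by linarith) hr
  have hM : 0 < m * c₉ / (k * c₈) := by positivity
  obtain ⟨C0, hC0⟩ : ∃ x, x = (m * c₉ / (k * c₈)) ^ (1 / t) := ⟨_, rfl⟩
  have hC0p : 0 < C0 := hC0 ▸ rpow_pos_of_pos hM _
  have hC0t : C0 ^ t = m * c₉ / (k * c₈) := by
    rw [hC0, ← rpow_mul hM.le, one_div_mul_cancel ht0.ne', rpow_one]
  have hC0s : 0 < C0 ^ s := rpow_pos_of_pos hC0p _
  refine ⟨(p + γ - 1) * c₈ / ((r + γ - 1) * C0 ^ s), by positivity, ?_⟩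
  intro lam hl hl0 A B C D hA hB hC hD hN hNm hSob hHol
  rw [le_div_iff₀ (by positivity)] at hl0
  have hCp : 0 < C ^ (p / r) := rpow_pos_of_pos hC _
  have e1 : C = C ^ (p / r) * C ^ s := by
    rw [← rpow_add hC, hs, ← add_div, add_sub_cancel, div_self hr.ne', rpow_one]
  have e2 : C ^ (p / r) = C ^ ((1 - γ) / r) * C ^ t := by
    rw [← rpow_add hC, ht, ← add_div]; congr 2; ring
  have h1 : (p + γ - 1) * c₈ < lam * (r + γ - 1) * C ^ s := by
    have a1 := mul_le_mul_of_nonneg_left hSob hP.le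
    have a2 := mul_nonneg hQ.le hD
    have a3 : (p + γ - 1) * c₈ * C ^ (p / r) < lam * (r + γ - 1) * C ^ s * C ^ (p / r) := by
      calc _ < lam * ((r + γ - 1) * C) := by linarith
        _ = lam * ((r + γ - 1) * (C ^ (p / r) * C ^ s)) := by rw [← e1]
        _ = _ := by ring
    exact lt_of_mul_lt_mul_right a3 hCp.le
  have h2 : C0 ≤ C := by
    by_contra! h
    have a1 : C ^ s ≤ C0 ^ s := rpow_le_rpow hC.le h.le hs0.le
    have a2 : 0 < lam * (r + γ - 1) := by positivity
    have a3 := mul_le_mul_of_nonneg_left a1 a2.le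
    linarith
  have h3 : m * c₉ ≤ k * c₈ * C ^ t := by
    have a1 : C0 ^ t ≤ C ^ t := rpow_le_rpow hC0p.le h2 ht0.le
    rw [hC0t, div_le_iff₀ (by positivity)] at a1
    linarith
  have h4 : m * B ≤ k * A := by
    have hw : 0 < C ^ ((1 - γ) / r) := rpow_pos_of_pos hC _
    calc m * B ≤ m * (c₉ * C ^ ((1 - γ) / r)) := mul_le_mul_of_nonneg_left hHol hm.le
      _ = m * c₉ * C ^ ((1 - γ) / r) := by ring
      _ ≤ k * c₈ * C ^ t * C ^ ((1 - γ) / r) := mul_le_mul_of_nonneg_right h3 hw.le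
      _ = k * (c₈ * C ^ (p / r)) := by rw [e2]; ring
      _ ≤ k * A := mul_le_mul_of_nonneg_left hSob hk.le
  have e3 : A / p + D / q - B / (1 - γ) - lam * C / r
      = k * A + (1 / q - 1 / r) * D - m * B := by
    have : lam * C = A + D - B := by linarith
    rw [this, hkdef, hmdef]; ring
  have := mul_nonneg hkq.le hD
  rw [e3]; linarith
end
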